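/- Let $d \ge 3$, let $0 < \sigma \le \tfrac{d-2}{2}$, let $0 < s < 2$, let $c > 0$, and let $p$ satisfy $\max\{1, \tfrac{d}{d+s-\sigma}\} < p < \tfrac{d}{\sigma}$. Suppose $\{K_N\}_{N \in 2^{\mathbb{Z}}}$ is a family of measurable kernels on $\mathbb{R}^d \times \mathbb{R}^d$ such that for every $M > 0$ there is a constant $C_M$ with, for all $N \in 2^{\mathbb{Z}}$ and all $x, y \in \mathbb{R}^d\setminus\{0\}$: $|K_N(x,y)| \le C_M\, N^{d-2\sigma} (|x|\,|y|)^{-\sigma}$ whenever $|x|, |y| \le N^{-1}$; $|K_N(x,y)| \le C_M\, N^d (N|x|)^{-\sigma}(N|y|)^{-M}$ whenever $2|x| \le N^{-1} \le |y|$; $|K_N(x,y)| \le C_M\, N^d (N|y|)^{-\sigma}(N|x|)^{-M}$ whenever $2|y| \le N^{-1} \le |x|$; and $|K_N(x,y)| \le C_M\, N^{d-2}(|x|+|y|)^{-2} e^{-cN^2|x-y|^2}$ whenever $|x|, |y| \ge \tfrac12 N^{-1}$. Then there is a constant $C$ such that for every measurable $f : \mathbb{R}^d \to \mathbb{C}$,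 $\left\|\int_{\mathbb{R}^d} \left(\sum_{N \in 2^{\mathbb{Z}}} N^s\, |K_N(x,y)|\right) |f(y)|\,dy\right\|_{L^p_x(\mathbb{R}^d)} \le C \left\|\,|y|^{-s} f(y)\,\right\|_{L^p_y(\mathbb{R}^d)}$. -/

import Mathlib

/-!
In each of the four regions, the bound on `N ^ s * |y| ^ s * |K_N|` is dominated by the product of a
profile of a single scale-invariant variable, `N |x|`, `N |y|` or `N |x - y|`, which decays in both
directions, and a kernel in `(x, y)` that is homogeneous of degree `-d` and independent of `N`: a
Hardy kernel of order `σ` where `|x| ≤ |y|`, a transposed Hardy kernel of order `σ - s` where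
`|y| ≤ |x|`, and a Riesz kernel of order `2 - s` where `|x|` and `|y|` are comparable. Summed over
dyadic `N`, the profiles are dominated by geometric series, uniformly in their variable. The
homogeneous kernels are bounded on `L^p` by the Schur test with power weights, whose integrals
converge exactly when `σ < d / p < d + s - σ` and `s < 2`.
-/

open MeasureTheory
open Module Set Metric
open scoped ENNReal NNReal

section SchurTest

variable {α β : Type*} [MeasurableSpace α] [MeasurableSpace β] {μ : Measure α} {ν : Measure β}
  {p q : ℝ}

theorem lintegral_mul_rpow_le_of_weight (hpq : p.HolderConjugate q) {k w g : β → ℝ≥0∞}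
    (hk : AEMeasurable k ν) (hw : AEMeasurable w ν) (hg : AEMeasurable g ν)
    (hw_zero : ∀ᵐ y ∂ν, w y ≠ 0) (hw_top : ∀ᵐ y ∂ν, w y ≠ ∞) :
    (∫⁻ y, k y * g y ∂ν) ^ p ≤
      (∫⁻ y, k y * w y ^ q ∂ν) ^ (p / q) * ∫⁻ y, k y * ((w y)⁻¹ * g y) ^ p ∂ν := by
  have hp := hpq.pos
  have hq := hpq.symm.pos
  have hsplit : ∀ᵐ y ∂ν, k y * g y =
      k y ^ (1 / q) * w y * (k y ^ (1 / p) * ((w y)⁻¹ * g y)) := by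
    filter_upwards [hw_zero, hw_top] with y h0 htop
    have hexp : 1 / q + 1 / p = 1 := by simpa using hpq.symm.inv_add_inv_eq_one
    calc k y * g y = k y ^ (1 / q + 1 / p) * (w y * (w y)⁻¹) * g y := by
          rw [hexp, ENNReal.rpow_one, ENNReal.mul_inv_cancel h0 htop, mul_one]
      _ = k y ^ (1 / q) * w y * (k y ^ (1 / p) * ((w y)⁻¹ * g y)) := by
          rw [ENNReal.rpow_add_of_nonneg _ _ (by positivity) (by positivity)]
          ring
  have hroot {t : ℝ} (ht : 0 < t) (a b : ℝ≥0∞) : (a ^ (1 / t) * b) ^ t = a * b ^ t := by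
    rw [ENNReal.mul_rpow_of_nonneg _ _ ht.le, ← ENNReal.rpow_mul, one_div_mul_cancel ht.ne',
      ENNReal.rpow_one]
  have hölder := ENNReal.lintegral_mul_le_Lp_mul_Lq ν hpq.symm
    ((hk.pow_const (1 / q)).mul hw) ((hk.pow_const (1 / p)).mul (hw.inv.mul hg))
  simp only [Pi.mul_apply, Pi.inv_apply, hroot hp, hroot hq] at hölder
  rw [lintegral_congr_ae hsplit]
  calc _ ≤ ((∫⁻ y, k y * w y ^ q ∂ν) ^ (1 / q) *
        (∫⁻ y, k y * ((w y)⁻¹ * g y) ^ p ∂ν) ^ (1 / p)) ^ p := by gcongr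
    _ = _ := by
      rw [mul_comm, hroot hp, mul_comm, ← ENNReal.rpow_mul, one_div_mul_eq_div]

variable [SFinite μ] [SFinite ν]

theorem lintegral_lintegral_mul_rpow_le_of_schur (hpq : p.HolderConjugate q)
    {k : α → β → ℝ≥0∞} {v : α → ℝ≥0∞} {w g : β → ℝ≥0∞} {A B : ℝ≥0∞}
    (hk : Measurable k.uncurry) (hv : AEMeasurable v μ) (hw : AEMeasurable w ν)
    (hg : AEMeasurable g ν) (hw_zero : ∀ᵐ y ∂ν, w y ≠ 0) (hw_top : ∀ᵐ y ∂ν, w y ≠ ∞)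
    (hrow : ∀ᵐ x ∂μ, ∫⁻ y, k x y * w y ^ q ∂ν ≤ A * v x ^ q)
    (hcol : ∀ᵐ y ∂ν, ∫⁻ x, k x y * v x ^ p ∂μ ≤ B * w y ^ p) :
    ∫⁻ x, (∫⁻ y, k x y * g y ∂ν) ^ p ∂μ ≤ A ^ (p / q) * B * ∫⁻ y, g y ^ p ∂ν := by
  have hp := hpq.pos
  have hq := hpq.symm.pos
  set g' : β → ℝ≥0∞ := fun y => ((w y)⁻¹ * g y) ^ p
  have hg' : AEMeasurable g' ν := (hw.inv.mul hg).pow_const p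
  have hmeas : AEMeasurable (fun z : α × β => A ^ (p / q) * v z.1 ^ p * (k z.1 z.2 * g' z.2))
      (μ.prod ν) :=
    ((hv.comp_fst.pow_const p).const_mul _).mul (hk.aemeasurable.mul hg'.comp_snd)
  have hölder : ∀ᵐ x ∂μ, (∫⁻ y, k x y * g y ∂ν) ^ p ≤
      ∫⁻ y, A ^ (p / q) * v x ^ p * (k x y * g' y) ∂ν := by
    filter_upwards [hrow] with x hx
    have hkx : AEMeasurable (k x) ν := hk.of_uncurry_left.aemeasurable
    have hkg : AEMeasurable (fun y => k x y * g' y) ν := hkx.mul hg'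
    rw [lintegral_const_mul'' _ hkg]
    refine (lintegral_mul_rpow_le_of_weight hpq hkx hw hg hw_zero hw_top).trans ?_
    gcongr
    calc (∫⁻ y, k x y * w y ^ q ∂ν) ^ (p / q) ≤ (A * v x ^ q) ^ (p / q) := by gcongr
      _ = A ^ (p / q) * v x ^ p := by
        rw [ENNReal.mul_rpow_of_nonneg _ _ (by positivity), ← ENNReal.rpow_mul,
          mul_div_cancel₀ p hq.ne']
  have hdual : ∀ᵐ y ∂ν, ∫⁻ x, A ^ (p / q) * v x ^ p * (k x y * g' y) ∂μ ≤
      A ^ (p / q) * B * g y ^ p := by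
    filter_upwards [hw_zero, hw_top, hcol] with y h0 htop hy
    have hky : AEMeasurable (fun x => k x y * v x ^ p) μ :=
      hk.of_uncurry_right.aemeasurable.mul (hv.pow_const p)
    calc ∫⁻ x, A ^ (p / q) * v x ^ p * (k x y * g' y) ∂μ
        = ∫⁻ x, A ^ (p / q) * g' y * (k x y * v x ^ p) ∂μ := by congr! 2; ring
      _ ≤ A ^ (p / q) * g' y * (B * w y ^ p) := by
        rw [lintegral_const_mul'' _ hky]
        gcongr
      _ = A ^ (p / q) * B * ((w y)⁻¹ * g y * w y) ^ p := by
        rw [ENNReal.mul_rpow_of_nonneg _ (w y) hp.le]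
        ring
      _ = A ^ (p / q) * B * g y ^ p := by
        rw [mul_right_comm (w y)⁻¹, ENNReal.inv_mul_cancel h0 htop, one_mul]
  calc ∫⁻ x, (∫⁻ y, k x y * g y ∂ν) ^ p ∂μ
      ≤ ∫⁻ x, ∫⁻ y, A ^ (p / q) * v x ^ p * (k x y * g' y) ∂ν ∂μ := lintegral_mono_ae hölder
    _ = ∫⁻ y, ∫⁻ x, A ^ (p / q) * v x ^ p * (k x y * g' y) ∂μ ∂ν := lintegral_lintegral_swap hmeas
    _ ≤ ∫⁻ y, A ^ (p / q) * B * g y ^ p ∂ν := lintegral_mono_ae hdual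
    _ = A ^ (p / q) * B * ∫⁻ y, g y ^ p ∂ν := lintegral_const_mul'' _ (hg.pow_const p)

theorem eLpNorm_lintegral_mul_le_of_schur (hpq : p.HolderConjugate q)
    {k : α → β → ℝ≥0∞} {v : α → ℝ≥0∞} {w g : β → ℝ≥0∞} {A B : ℝ≥0∞}
    (hk : Measurable k.uncurry) (hv : AEMeasurable v μ) (hw : AEMeasurable w ν)
    (hg : AEMeasurable g ν) (hw_zero : ∀ᵐ y ∂ν, w y ≠ 0) (hw_top : ∀ᵐ y ∂ν, w y ≠ ∞)
    (hrow : ∀ᵐ x ∂μ, ∫⁻ y, k x y * w y ^ q ∂ν ≤ A * v x ^ q)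
    (hcol : ∀ᵐ y ∂ν, ∫⁻ x, k x y * v x ^ p ∂μ ≤ B * w y ^ p) :
    eLpNorm (fun x => ∫⁻ y, k x y * g y ∂ν) (ENNReal.ofReal p) μ ≤
      (A ^ (p / q) * B) ^ (1 / p) * eLpNorm g (ENNReal.ofReal p) ν := by
  have hp := hpq.pos
  have hp0 : ENNReal.ofReal p ≠ 0 := (ENNReal.ofReal_pos.2 hp).ne'
  simp only [eLpNorm_eq_lintegral_rpow_enorm_toReal hp0 ENNReal.ofReal_ne_top,
    ENNReal.toReal_ofReal hp.le, enorm_eq_self]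
  rw [← ENNReal.mul_rpow_of_nonneg _ _ (by positivity)]
  gcongr
  exact lintegral_lintegral_mul_rpow_le_of_schur hpq hk hv hw hg hw_zero hw_top hrow hcol

end SchurTest

section PowerIntegrals

variable {E : Type*} [NormedAddCommGroup E] [NormedSpace ℝ E] [FiniteDimensional ℝ E]
  [Nontrivial E] [MeasurableSpace E] [BorelSpace E] (μ : Measure E) [μ.IsAddHaarMeasure]

theorem lintegral_comp_norm_addHaar {f : ℝ → ℝ≥0∞} (hf : Measurable f) :
    ∫⁻ x, f ‖x‖ ∂μ = finrank ℝ E * μ (ball 0 1) *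
      ∫⁻ r in Ioi (0 : ℝ), ENNReal.ofReal (r ^ (finrank ℝ E - 1)) * f r := by
  have hpolar : ∫⁻ x : ({0}ᶜ : Set E), f ‖x.1‖ ∂(μ.comap (↑)) =
      ∫⁻ z, f z.2 ∂(μ.toSphere.prod (.volumeIoiPow (finrank ℝ E - 1))) := by
    simpa using μ.measurePreserving_homeomorphUnitSphereProd.lintegral_comp
      (f := fun z => f z.2) (by fun_prop)
  calc ∫⁻ x, f ‖x‖ ∂μ = ∫⁻ x : ({0}ᶜ : Set E), f ‖x.1‖ ∂(μ.comap (↑)) := by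
        rw [lintegral_subtype_comap (measurableSet_singleton _).compl fun x => f ‖x‖,
          restrict_compl_singleton]
    _ = μ.toSphere univ * ∫⁻ r : Ioi (0 : ℝ), f r ∂.volumeIoiPow (finrank ℝ E - 1) := by
        rw [hpolar, lintegral_prod _ (by fun_prop)]
        simp [mul_comm]
    _ = _ := by
        rw [μ.toSphere_apply_univ, Measure.volumeIoiPow, lintegral_withDensity_eq_lintegral_mul _
          (by fun_prop) (by fun_prop)]
        congr 1
        exact lintegral_subtype_comap measurableSet_Ioi
          fun r => ENNReal.ofReal (r ^ (finrank ℝ E - 1)) * f r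

theorem setLIntegral_norm_preimage_rpow {S : Set ℝ} (hS : MeasurableSet S) (e : ℝ) :
    ∫⁻ x in norm ⁻¹' S, ENNReal.ofReal (‖x‖ ^ e) ∂μ = finrank ℝ E * μ (ball 0 1) *
      ∫⁻ r in Ioi (0 : ℝ) ∩ S, ENNReal.ofReal (r ^ (finrank ℝ E + e - 1)) := by
  have hdim : 1 ≤ finrank ℝ E := finrank_pos
  have hradial : EqOn
      (fun r => ENNReal.ofReal (r ^ (finrank ℝ E - 1)) *
        S.indicator (fun r => ENNReal.ofReal (r ^ e)) r)
      (S.indicator fun r => ENNReal.ofReal (r ^ (finrank ℝ E + e - 1))) (Ioi 0) := by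
    intro r (hr : 0 < r)
    by_cases hrS : r ∈ S
    · simp only [indicator_of_mem hrS, ← ENNReal.ofReal_mul (pow_nonneg hr.le _)]
      rw [← Real.rpow_natCast, ← Real.rpow_add hr, Nat.cast_sub hdim, Nat.cast_one]
      ring_nf
    · simp [hrS]
  calc ∫⁻ x in norm ⁻¹' S, ENNReal.ofReal (‖x‖ ^ e) ∂μ
      = ∫⁻ x, S.indicator (fun r => ENNReal.ofReal (r ^ e)) ‖x‖ ∂μ :=
        (lintegral_indicator (measurable_norm hS) _).symm
    _ = _ := by
      rw [lintegral_comp_norm_addHaar μ (by fun_prop (disch := assumption)),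
        setLIntegral_congr_fun measurableSet_Ioi hradial, setLIntegral_indicator hS, inter_comm]

theorem setLIntegral_norm_le_rpow {e R : ℝ} (he : 0 < finrank ℝ E + e) (hR : 0 ≤ R) :
    ∫⁻ x in {x | ‖x‖ ≤ R}, ENNReal.ofReal (‖x‖ ^ e) ∂μ = finrank ℝ E * μ (ball 0 1) *
      ENNReal.ofReal (finrank ℝ E + e)⁻¹ * ENNReal.ofReal (R ^ (finrank ℝ E + e)) := by
  have hint : IntegrableOn (fun r : ℝ => r ^ (finrank ℝ E + e - 1)) (Ioc 0 R) :=
    (intervalIntegrable_iff_integrableOn_Ioc_of_le hR).1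
      (intervalIntegral.intervalIntegrable_rpow' (by linarith))
  have hnonneg : 0 ≤ᵐ[volume.restrict (Ioc 0 R)] fun r : ℝ => r ^ (finrank ℝ E + e - 1) :=
    ae_restrict_of_forall_mem measurableSet_Ioc fun r hr => Real.rpow_nonneg hr.1.le _
  refine (setLIntegral_norm_preimage_rpow μ measurableSet_Iic e).trans ?_
  rw [Ioi_inter_Iic, ← ofReal_integral_eq_lintegral_ofReal hint hnonneg,
    ← intervalIntegral.integral_of_le hR, integral_rpow (Or.inl (by linarith)),
    sub_add_cancel, Real.zero_rpow he.ne', sub_zero, div_eq_inv_mul,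
    ENNReal.ofReal_mul (inv_nonneg.2 he.le), ← mul_assoc]

theorem setLIntegral_le_norm_rpow {e R : ℝ} (he : finrank ℝ E + e < 0) (hR : 0 < R) :
    ∫⁻ x in {x | R ≤ ‖x‖}, ENNReal.ofReal (‖x‖ ^ e) ∂μ = finrank ℝ E * μ (ball 0 1) *
      ENNReal.ofReal (-(finrank ℝ E + e))⁻¹ * ENNReal.ofReal (R ^ (finrank ℝ E + e)) := by
  have hint : IntegrableOn (fun r : ℝ => r ^ (finrank ℝ E + e - 1)) (Ioi R) :=
    integrableOn_Ioi_rpow_of_lt (by linarith) hR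
  have hnonneg : 0 ≤ᵐ[volume.restrict (Ioi R)] fun r : ℝ => r ^ (finrank ℝ E + e - 1) :=
    ae_restrict_of_forall_mem measurableSet_Ioi fun r hr => Real.rpow_nonneg (hR.trans hr).le _
  refine (setLIntegral_norm_preimage_rpow μ measurableSet_Ici e).trans ?_
  rw [inter_eq_right.2 (Ici_subset_Ioi.2 hR), setLIntegral_congr Ioi_ae_eq_Ici.symm,
    ← ofReal_integral_eq_lintegral_ofReal hint hnonneg,
    integral_Ioi_rpow_of_lt (by linarith) hR, sub_add_cancel, neg_div, ← div_neg, div_eq_inv_mul,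
    ENNReal.ofReal_mul (inv_nonneg.2 (by linarith)), ← mul_assoc]

end PowerIntegrals

theorem rpow_le_mul_rpow_of_comparable {L a b : ℝ} (ha : 0 < a) (hb : 0 < b) (hab : a ≤ L * b)
    (hba : b ≤ L * a) (e : ℝ) : b ^ e ≤ L ^ |e| * a ^ e := by
  have hL : 0 < L := pos_of_mul_pos_left (ha.trans_le hab) hb.le
  rcases le_total 0 e with he | he
  · rw [abs_of_nonneg he, ← Real.mul_rpow hL.le ha.le]
    gcongr
  · rw [abs_of_nonpos he]
    calc b ^ e ≤ (L⁻¹ * a) ^ e :=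
          Real.rpow_le_rpow_of_nonpos (by positivity) ((inv_mul_le_iff₀ hL).2 hab) he
      _ = L ^ (-e) * a ^ e := by
          rw [Real.mul_rpow (by positivity) ha.le, Real.inv_rpow hL.le, Real.rpow_neg hL.le]

section Kernels

/-- The Hardy kernel of order `τ` in dimension `d`, as a function of `a = |x|` and `b = |y|`. It is
homogeneous of degree `-d` and lives on `|x| ≤ |y|`; its transpose is obtained by swapping the
arguments. -/
noncomputable def hardyKernel (d τ a b : ℝ) : ℝ :=
  if a ≤ b then a ^ (-τ) * b ^ (τ - d) else 0

/-- The Riesz kernel `|x - y| ^ (θ - d)` restricted to comparable `a = |x|` and `b = |y|`, as a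
function of `a`, `b` and `r = |x - y|`. The factor `(|x| + |y|) ^ (-θ)` makes it homogeneous of
degree `-d`. -/
noncomputable def localRieszKernel (d θ a b r : ℝ) : ℝ :=
  if a ≤ 2 * b ∧ b ≤ 2 * a then r ^ (θ - d) * (a + b) ^ (-θ) else 0

/-- The sum of the Hardy kernel of order `τ`, the transposed Hardy kernel of order `τ'` and the
local Riesz kernel of order `θ`, as a function of `a = |x|`, `b = |y|` and `r = |x - y|`. With
`(τ, τ', θ) = (σ, σ - s, 2 - s)` it dominates `∑ N, N ^ s * |K_N(x, y)| * |y| ^ s`. -/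
noncomputable def homogeneousMajorant (d τ τ' θ a b r : ℝ) : ℝ :=
  hardyKernel d τ a b + hardyKernel d τ' b a + localRieszKernel d θ a b r

variable {d τ τ' θ a b r : ℝ}

theorem hardyKernel_of_le (hab : a ≤ b) : hardyKernel d τ a b = a ^ (-τ) * b ^ (τ - d) :=
  if_pos hab

theorem hardyKernel_nonneg (ha : 0 ≤ a) (hb : 0 ≤ b) : 0 ≤ hardyKernel d τ a b := by
  unfold hardyKernel
  split_ifs <;> positivity

theorem hardyKernel_mono (ha : 0 < a) (hτ : τ ≤ τ') :
    hardyKernel d τ a b ≤ hardyKernel d τ' a b := by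
  unfold hardyKernel
  split_ifs with hab
  · have hb : 0 < b := ha.trans_le hab
    calc a ^ (-τ) * b ^ (τ - d) = a ^ (-τ') * (a ^ (τ' - τ) * b ^ (τ - d)) := by
          rw [← mul_assoc, ← Real.rpow_add ha]
          ring_nf
      _ ≤ a ^ (-τ') * (b ^ (τ' - τ) * b ^ (τ - d)) := by
          gcongr
      _ = a ^ (-τ') * b ^ (τ' - d) := by
          rw [← Real.rpow_add hb]
          ring_nf
  · rfl

theorem localRieszKernel_nonneg (ha : 0 ≤ a) (hb : 0 ≤ b) (hr : 0 ≤ r) :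
    0 ≤ localRieszKernel d θ a b r := by
  unfold localRieszKernel
  split_ifs <;> positivity

theorem localRieszKernel_comm : localRieszKernel d θ a b r = localRieszKernel d θ b a r := by
  simp only [localRieszKernel, and_comm, add_comm]

theorem homogeneousMajorant_swap :
    homogeneousMajorant d τ τ' θ a b r = homogeneousMajorant d τ' τ θ b a r := by
  simp only [homogeneousMajorant, localRieszKernel_comm, add_comm]

theorem homogeneousMajorant_nonneg (ha : 0 ≤ a) (hb : 0 ≤ b) (hr : 0 ≤ r) :
    0 ≤ homogeneousMajorant d τ τ' θ a b r :=
  add_nonneg (add_nonneg (hardyKernel_nonneg ha hb) (hardyKernel_nonneg hb ha))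
    (localRieszKernel_nonneg ha hb hr)

theorem localRieszKernel_mul_rpow_le (ha : 0 < a) (hb : 0 < b) (hr : 0 ≤ r)
    (hθ : 0 ≤ θ) (β : ℝ) :
    localRieszKernel d θ a b r * b ^ (-β) ≤ 2 ^ |β| * a ^ (-θ - β) * r ^ (θ - d) := by
  unfold localRieszKernel
  split_ifs with hab
  · have hweight := rpow_le_mul_rpow_of_comparable ha hb hab.1 hab.2 (-β)
    have hsum : (a + b) ^ (-θ) ≤ a ^ (-θ) :=
      Real.rpow_le_rpow_of_nonpos ha (by linarith) (by linarith)
    calc r ^ (θ - d) * (a + b) ^ (-θ) * b ^ (-β)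
        ≤ r ^ (θ - d) * a ^ (-θ) * (2 ^ |-β| * a ^ (-β)) := by gcongr
      _ = 2 ^ |β| * a ^ (-θ - β) * r ^ (θ - d) := by
        rw [abs_neg, sub_eq_add_neg (-θ), Real.rpow_add ha]
        ring
  · rw [zero_mul]
    positivity

theorem measurable_hardyKernel {α : Type*} [MeasurableSpace α] {f g : α → ℝ} (hf : Measurable f)
    (hg : Measurable g) : Measurable fun x => hardyKernel d τ (f x) (g x) :=
  Measurable.ite (measurableSet_le hf hg) (by fun_prop) measurable_const

theorem measurable_localRieszKernel {α : Type*} [MeasurableSpace α] {f g h : α → ℝ}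
    (hf : Measurable f) (hg : Measurable g) (hh : Measurable h) :
    Measurable fun x => localRieszKernel d θ (f x) (g x) (h x) :=
  Measurable.ite ((measurableSet_le hf (by fun_prop)).inter (measurableSet_le hg (by fun_prop)))
    (by fun_prop) measurable_const

theorem measurable_homogeneousMajorant {α : Type*} [MeasurableSpace α] {f g h : α → ℝ}
    (hf : Measurable f) (hg : Measurable g) (hh : Measurable h) :
    Measurable fun x => homogeneousMajorant d τ τ' θ (f x) (g x) (h x) :=
  ((measurable_hardyKernel hf hg).add (measurable_hardyKernel hg hf)).add
    (measurable_localRieszKernel hf hg hh)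

end Kernels

section PowerWeights

variable {E : Type*} [NormedAddCommGroup E] [MeasurableSpace E] {μ : Measure E}

/-- Boundedness of the integral operator with kernel `k` on the space of functions with norm
`sup |x| ^ β * |g x|`, tested on the extremal function `|y| ^ (-β)`. These are the hypotheses of the
Schur test for power weights. -/
def BoundedOnPower (μ : Measure E) (k : E → E → ℝ≥0∞) (β : ℝ) : Prop :=
  ∃ C ≠ ∞, ∀ x ≠ 0,
    ∫⁻ y, k x y * ENNReal.ofReal (‖y‖ ^ (-β)) ∂μ ≤ C * ENNReal.ofReal (‖x‖ ^ (-β))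

theorem BoundedOnPower.add [OpensMeasurableSpace E] {k₁ k₂ : E → E → ℝ≥0∞} {β : ℝ}
    (h₁ : BoundedOnPower μ k₁ β) (h₂ : BoundedOnPower μ k₂ β) (hk₁ : ∀ x, Measurable (k₁ x)) :
    BoundedOnPower μ (fun x y => k₁ x y + k₂ x y) β := by
  obtain ⟨C₁, hC₁, hbound₁⟩ := h₁
  obtain ⟨C₂, hC₂, hbound₂⟩ := h₂
  refine ⟨C₁ + C₂, by finiteness, fun x hx => ?_⟩
  simp only [add_mul]
  rw [lintegral_add_left (by fun_prop)]
  exact add_le_add (hbound₁ x hx) (hbound₂ x hx)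

theorem eLpNorm_lintegral_mul_le_of_boundedOnPower [OpensMeasurableSpace E] [NullSingletonClass μ]
    [SFinite μ] {p q e : ℝ} (hpq : p.HolderConjugate q) {k : E → E → ℝ≥0∞}
    (hk : Measurable k.uncurry) (hrow : BoundedOnPower μ k (e * q))
    (hcol : BoundedOnPower μ (fun y x => k x y) (e * p)) :
    ∃ C ≠ ∞, ∀ g : E → ℝ≥0∞, AEMeasurable g μ →
      eLpNorm (fun x => ∫⁻ y, k x y * g y ∂μ) (ENNReal.ofReal p) μ ≤
        C * eLpNorm g (ENNReal.ofReal p) μ := by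
  obtain ⟨A, hA, hrow⟩ := hrow
  obtain ⟨B, hB, hcol⟩ := hcol
  have hp := hpq.pos
  have hq := hpq.symm.pos
  set w : E → ℝ≥0∞ := fun x => ENNReal.ofReal (‖x‖ ^ (-e))
  have hw_zero : ∀ᵐ x ∂μ, w x ≠ 0 := by
    filter_upwards [Measure.ae_ne μ 0] with x hx
    exact (ENNReal.ofReal_pos.2 (Real.rpow_pos_of_pos (norm_pos_iff.2 hx) _)).ne'
  have hw_rpow {t : ℝ} (ht : 0 < t) (x : E) : w x ^ t = ENNReal.ofReal (‖x‖ ^ (-(e * t))) := by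
    rw [ENNReal.ofReal_rpow_of_nonneg (by positivity) ht.le, ← Real.rpow_mul (norm_nonneg x),
      neg_mul]
  refine ⟨(A ^ (p / q) * B) ^ (1 / p), by finiteness, fun g hg => ?_⟩
  refine eLpNorm_lintegral_mul_le_of_schur hpq hk (v := w) (w := w) (by fun_prop) (by fun_prop) hg
    hw_zero (.of_forall fun x => ENNReal.ofReal_ne_top) ?_ ?_
  · filter_upwards [Measure.ae_ne μ 0] with x hx
    simpa only [hw_rpow hq] using hrow x hx
  · filter_upwards [Measure.ae_ne μ 0] with y hy
    simpa only [hw_rpow hp] using hcol y hy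

variable [NormedSpace ℝ E] [FiniteDimensional ℝ E] [BorelSpace E] [Nontrivial E]
  [μ.IsAddHaarMeasure]

theorem boundedOnPower_hardyKernel {τ β : ℝ} (hτ : τ < β) :
    BoundedOnPower μ (fun x y => ENNReal.ofReal (hardyKernel (finrank ℝ E) τ ‖x‖ ‖y‖)) β := by
  have he : finrank ℝ E + (τ - finrank ℝ E - β) < 0 := by linarith
  refine ⟨finrank ℝ E * μ (ball 0 1) * ENNReal.ofReal (β - τ)⁻¹, by finiteness,
    fun x hx => le_of_eq ?_⟩
  have ha : 0 < ‖x‖ := norm_pos_iff.2 hx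
  have hkernel (y : E) :
      ENNReal.ofReal (hardyKernel (finrank ℝ E) τ ‖x‖ ‖y‖) * ENNReal.ofReal (‖y‖ ^ (-β)) =
      {y : E | ‖x‖ ≤ ‖y‖}.indicator (fun y =>
        ENNReal.ofReal (‖x‖ ^ (-τ)) * ENNReal.ofReal (‖y‖ ^ (τ - finrank ℝ E - β))) y := by
    simp only [hardyKernel, indicator_apply, mem_ofPred_eq]
    split_ifs with hxy
    · rw [sub_eq_add_neg _ β, Real.rpow_add (ha.trans_le hxy), ENNReal.ofReal_mul (by positivity),
        ENNReal.ofReal_mul (by positivity), mul_assoc]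
    · simp
  rw [lintegral_congr hkernel, lintegral_indicator (measurableSet_le (by fun_prop) (by fun_prop)),
    lintegral_const_mul' _ _ (by finiteness), setLIntegral_le_norm_rpow μ he ha, mul_left_comm,
    ← ENNReal.ofReal_mul (by positivity), ← Real.rpow_add ha]
  ring_nf

theorem boundedOnPower_hardyKernel_swap {τ β : ℝ} (hτ : τ + β < finrank ℝ E) :
    BoundedOnPower μ (fun x y => ENNReal.ofReal (hardyKernel (finrank ℝ E) τ ‖y‖ ‖x‖)) β := by
  have he : 0 < finrank ℝ E + (-τ - β) := by linarith
  refine ⟨finrank ℝ E * μ (ball 0 1) * ENNReal.ofReal (finrank ℝ E - τ - β)⁻¹, by finiteness,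
    fun x hx => le_of_eq ?_⟩
  have ha : 0 < ‖x‖ := norm_pos_iff.2 hx
  have hkernel : ∀ᵐ y ∂μ,
      ENNReal.ofReal (hardyKernel (finrank ℝ E) τ ‖y‖ ‖x‖) * ENNReal.ofReal (‖y‖ ^ (-β)) =
      {y : E | ‖y‖ ≤ ‖x‖}.indicator (fun y =>
        ENNReal.ofReal (‖x‖ ^ (τ - finrank ℝ E)) * ENNReal.ofReal (‖y‖ ^ (-τ - β))) y := by
    filter_upwards [Measure.ae_ne μ 0] with y hy
    simp only [hardyKernel, indicator_apply, mem_ofPred_eq]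
    split_ifs with hxy
    · rw [sub_eq_add_neg _ β, Real.rpow_add (norm_pos_iff.2 hy), ENNReal.ofReal_mul (by positivity),
        ENNReal.ofReal_mul (by positivity), mul_left_comm, mul_assoc]
    · simp
  rw [lintegral_congr_ae hkernel,
    lintegral_indicator (measurableSet_le (by fun_prop) (by fun_prop)),
    lintegral_const_mul' _ _ (by finiteness), setLIntegral_norm_le_rpow μ he ha.le, mul_left_comm,
    ← ENNReal.ofReal_mul (by positivity), ← Real.rpow_add ha]
  ring_nf

theorem boundedOnPower_localRieszKernel {θ : ℝ} (hθ : 0 < θ) (β : ℝ) :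
    BoundedOnPower μ
      (fun x y => ENNReal.ofReal (localRieszKernel (finrank ℝ E) θ ‖x‖ ‖y‖ ‖x - y‖)) β := by
  have he : 0 < finrank ℝ E + (θ - finrank ℝ E) := by linarith
  refine ⟨finrank ℝ E * μ (ball 0 1) * ENNReal.ofReal (finrank ℝ E + (θ - finrank ℝ E))⁻¹ *
    ENNReal.ofReal (2 ^ |β| * 3 ^ θ), by finiteness, fun x hx => ?_⟩
  have ha : 0 < ‖x‖ := norm_pos_iff.2 hx
  have hkernel : ∀ᵐ y ∂μ,
      ENNReal.ofReal (localRieszKernel (finrank ℝ E) θ ‖x‖ ‖y‖ ‖x - y‖) *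
        ENNReal.ofReal (‖y‖ ^ (-β)) ≤
      ENNReal.ofReal (2 ^ |β| * ‖x‖ ^ (-θ - β)) * {z : E | ‖z‖ ≤ 3 * ‖x‖}.indicator
        (fun z => ENNReal.ofReal (‖z‖ ^ (θ - finrank ℝ E))) (x - y) := by
    filter_upwards [Measure.ae_ne μ 0] with y hy
    by_cases hxy : ‖y‖ ≤ 2 * ‖x‖
    · have hball : x - y ∈ {z : E | ‖z‖ ≤ 3 * ‖x‖} := by
        simpa using (norm_sub_le x y).trans (by linarith)
      rw [indicator_of_mem hball, ← ENNReal.ofReal_mul' (by positivity),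
        ← ENNReal.ofReal_mul (by positivity)]
      exact ENNReal.ofReal_le_ofReal
        (localRieszKernel_mul_rpow_le ha (norm_pos_iff.2 hy) (norm_nonneg _) hθ.le β)
    · simp [localRieszKernel, hxy]
  refine (lintegral_mono_ae hkernel).trans_eq ?_
  rw [lintegral_const_mul' _ _ (by finiteness),
    lintegral_sub_left_eq_self ({z : E | ‖z‖ ≤ 3 * ‖x‖}.indicator
      fun z => ENNReal.ofReal (‖z‖ ^ (θ - finrank ℝ E))) x,
    lintegral_indicator (measurableSet_le (by fun_prop) (by fun_prop)),
    setLIntegral_norm_le_rpow μ he (by positivity), mul_left_comm, mul_assoc (_ * _ * _),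
    ← ENNReal.ofReal_mul (by positivity), ← ENNReal.ofReal_mul (by positivity)]
  congr 2
  rw [add_sub_cancel, Real.mul_rpow (by norm_num) ha.le, sub_eq_add_neg, Real.rpow_add ha,
    Real.rpow_neg ha.le θ]
  field_simp

theorem boundedOnPower_homogeneousMajorant {τ τ' θ β : ℝ} (hτ : τ < β)
    (hτ' : τ' + β < finrank ℝ E) (hθ : 0 < θ) :
    BoundedOnPower μ (fun x y => ENNReal.ofReal
      (homogeneousMajorant (finrank ℝ E) τ τ' θ ‖x‖ ‖y‖ ‖x - y‖)) β := by
  have hmeas (x : E) : Measurable fun y : E =>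
      ENNReal.ofReal (hardyKernel (finrank ℝ E) τ ‖x‖ ‖y‖) :=
    (measurable_hardyKernel measurable_const measurable_norm).ennreal_ofReal
  have hmeas_swap (x : E) : Measurable fun y : E =>
      ENNReal.ofReal (hardyKernel (finrank ℝ E) τ' ‖y‖ ‖x‖) :=
    (measurable_hardyKernel measurable_norm measurable_const).ennreal_ofReal
  have hhardy (t : ℝ) (x y : E) : 0 ≤ hardyKernel (finrank ℝ E) t ‖x‖ ‖y‖ :=
    hardyKernel_nonneg (norm_nonneg x) (norm_nonneg y)
  have hlocal (x y : E) : 0 ≤ localRieszKernel (finrank ℝ E) θ ‖x‖ ‖y‖ ‖x - y‖ :=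
    localRieszKernel_nonneg (norm_nonneg x) (norm_nonneg y) (norm_nonneg _)
  simp only [homogeneousMajorant, hhardy, hlocal, add_nonneg, ENNReal.ofReal_add]
  exact ((boundedOnPower_hardyKernel hτ).add (boundedOnPower_hardyKernel_swap hτ') hmeas).add
    (boundedOnPower_localRieszKernel hθ β) fun x => (hmeas x).add (hmeas_swap x)

theorem boundedOnPower_homogeneousMajorant_swap {τ τ' θ β : ℝ} (hτ : τ + β < finrank ℝ E)
    (hτ' : τ' < β) (hθ : 0 < θ) :
    BoundedOnPower μ (fun x y => ENNReal.ofReal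
      (homogeneousMajorant (finrank ℝ E) τ τ' θ ‖y‖ ‖x‖ ‖y - x‖)) β := by
  simpa only [homogeneousMajorant_swap (τ := τ), norm_sub_rev] using
    boundedOnPower_homogeneousMajorant (μ := μ) hτ' hτ hθ

theorem eLpNorm_lintegral_homogeneousMajorant_mul_le {τ τ' θ p : ℝ} (hp : 1 < p)
    (hτ : τ < finrank ℝ E / p) (hτ' : τ' + finrank ℝ E / p < finrank ℝ E) (hθ : 0 < θ) :
    ∃ C ≠ ∞, ∀ g : E → ℝ≥0∞, AEMeasurable g μ →
      eLpNorm (fun x => ∫⁻ y, ENNReal.ofReal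
          (homogeneousMajorant (finrank ℝ E) τ τ' θ ‖x‖ ‖y‖ ‖x - y‖) * g y ∂μ)
        (ENNReal.ofReal p) μ ≤ C * eLpNorm g (ENNReal.ofReal p) μ := by
  have hpq := Real.HolderConjugate.conjExponent hp
  have hq0 := hpq.symm.pos
  set q := p.conjExponent
  have hrow : finrank ℝ E / (p * q) * q = finrank ℝ E / p := by field_simp
  have hcol : finrank ℝ E / (p * q) * p = finrank ℝ E - finrank ℝ E / p := by
    calc finrank ℝ E / (p * q) * p = finrank ℝ E * q⁻¹ := by field_simp
      _ = finrank ℝ E - finrank ℝ E / p := by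
        rw [← hpq.one_sub_inv]
        ring
  -- With this weight, testing rows and testing columns lead to the same conditions on the orders.
  refine eLpNorm_lintegral_mul_le_of_boundedOnPower (e := finrank ℝ E / (p * q)) hpq ?_ ?_ ?_
  · exact (measurable_homogeneousMajorant (by fun_prop) (by fun_prop) (by fun_prop)).ennreal_ofReal
  · rw [hrow]
    exact boundedOnPower_homogeneousMajorant hτ hτ' hθ
  · rw [hcol]
    exact boundedOnPower_homogeneousMajorant_swap (by linarith) (by linarith) hθ

end PowerWeights

section DyadicSums

/-- The two-sided power decay `t ^ ε` for `t ≤ 1` and `t ^ (-ε)` for `1 ≤ t`, which is uniformly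
summable over the dyadic multiples of a positive number. -/
noncomputable def twoSidedDecay (ε t : ℝ) : ℝ :=
  min (t ^ ε) (t ^ (-ε))

variable {ε κ t u : ℝ}

theorem twoSidedDecay_nonneg (ht : 0 ≤ t) : 0 ≤ twoSidedDecay ε t := by
  unfold twoSidedDecay
  positivity

theorem rpow_le_twoSidedDecay_of_le_one (hε : 0 ≤ ε) (hκ : ε ≤ κ) (ht : 0 < t) (ht1 : t ≤ 1) :
    t ^ κ ≤ twoSidedDecay ε t :=
  le_min (Real.rpow_le_rpow_of_exponent_ge ht ht1 hκ)
    (Real.rpow_le_rpow_of_exponent_ge ht ht1 (by linarith))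

theorem rpow_le_twoSidedDecay_of_one_le (hε : 0 ≤ ε) (hκ : κ ≤ -ε) (ht : 1 ≤ t) :
    t ^ κ ≤ twoSidedDecay ε t :=
  le_min (Real.rpow_le_rpow_of_exponent_le ht (by linarith))
    (Real.rpow_le_rpow_of_exponent_le ht hκ)

theorem twoSidedDecay_le_of_mem_Icc (hε : 0 ≤ ε) (ht : 0 < t) (hu : u ∈ Icc t (2 * t)) :
    twoSidedDecay ε u ≤ 2 ^ ε * twoSidedDecay ε t := by
  have hu0 : 0 < u := ht.trans_le hu.1
  rw [twoSidedDecay, twoSidedDecay, mul_min_of_nonneg _ _ (by positivity)]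
  refine min_le_min ?_ ?_
  · rw [← Real.mul_rpow zero_le_two ht.le]
    gcongr
    exact hu.2
  · calc u ^ (-ε) ≤ t ^ (-ε) := Real.rpow_le_rpow_of_nonpos ht hu.1 (by linarith)
      _ ≤ 2 ^ ε * t ^ (-ε) :=
        le_mul_of_one_le_left (by positivity) (Real.one_le_rpow one_le_two hε)

theorem twoSidedDecay_two_zpow_le (k : ℤ) :
    twoSidedDecay ε (2 ^ k) ≤ (2 ^ (-ε)) ^ k.natAbs := by
  have hzpow (κ : ℝ) : ((2 : ℝ) ^ k) ^ κ = 2 ^ (k * κ) := by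
    rw [← Real.rpow_intCast, ← Real.rpow_mul zero_le_two]
  rw [← Real.rpow_mul_natCast zero_le_two, Nat.cast_natAbs, Int.cast_abs, twoSidedDecay, hzpow,
    hzpow]
  rcases abs_cases (k : ℝ) with ⟨hk, -⟩ | ⟨hk, -⟩ <;> rw [hk]
  · exact (min_le_right _ _).trans_eq (by ring_nf)
  · exact (min_le_left _ _).trans_eq (by ring_nf)

theorem exists_tsum_twoSidedDecay_le (hε : 0 < ε) :
    ∃ C ≠ ∞, ∀ t : ℝ, 0 < t → ∑' k : ℤ, ENNReal.ofReal (twoSidedDecay ε (2 ^ k * t)) ≤ C := by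
  have hratio : (2 : ℝ) ^ (-ε) < 1 := Real.rpow_lt_one_of_one_lt_of_neg one_lt_two (by linarith)
  have hgeom : Summable fun n : ℕ => ((2 : ℝ) ^ (-ε)) ^ n :=
    summable_geometric_of_lt_one (by positivity) hratio
  have hsum : Summable fun k : ℤ => 2 ^ ε * ((2 : ℝ) ^ (-ε)) ^ k.natAbs := by
    refine Summable.mul_left _ (.of_nat_of_neg ?_ ?_) <;> simpa using hgeom
  let F (k : ℤ) : ℝ≥0∞ := ENNReal.ofReal (2 ^ ε * ((2 : ℝ) ^ (-ε)) ^ k.natAbs)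
  refine ⟨∑' k, F k, hsum.tsum_ofReal_ne_top, fun t ht => ?_⟩
  obtain ⟨j, hj, hj'⟩ := exists_mem_Ico_zpow ht one_lt_two
  rw [← (Equiv.addRight j).tsum_eq F]
  refine ENNReal.tsum_le_tsum fun k => ENNReal.ofReal_le_ofReal ?_
  have hmem : 2 ^ k * t ∈ Icc ((2 : ℝ) ^ (k + j)) (2 * 2 ^ (k + j)) := by
    rw [zpow_add₀ two_ne_zero]
    rw [zpow_add_one₀ two_ne_zero] at hj'
    constructor <;> nlinarith [zpow_pos (two_pos : (0 : ℝ) < 2) k]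
  calc twoSidedDecay ε (2 ^ k * t) ≤ 2 ^ ε * twoSidedDecay ε (2 ^ (k + j)) :=
        twoSidedDecay_le_of_mem_Icc hε.le (by positivity) hmem
    _ ≤ 2 ^ ε * ((2 : ℝ) ^ (-ε)) ^ (k + j).natAbs := by
        gcongr
        exact twoSidedDecay_two_zpow_le _

theorem rpow_mul_exp_neg_mul_sq_le {c : ℝ} (hc : 0 < c) (hκ : 0 < κ) (ht : 0 < t) :
    t ^ κ * Real.exp (-c * t ^ 2) ≤ (κ / (2 * c)) ^ (κ / 2) := by
  have hexp : 2 * c / κ * t ^ 2 ≤ Real.exp (2 * c / κ * t ^ 2) := by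
    linarith [Real.add_one_le_exp (2 * c / κ * t ^ 2)]
  have hsq : t ^ 2 ≤ κ / (2 * c) * Real.exp (2 * c / κ * t ^ 2) := by
    calc t ^ 2 = κ / (2 * c) * (2 * c / κ * t ^ 2) := by field_simp
      _ ≤ _ := by gcongr
  calc t ^ κ * Real.exp (-c * t ^ 2) = (t ^ 2) ^ (κ / 2) * Real.exp (-c * t ^ 2) := by
        rw [← Real.rpow_natCast_mul ht.le]
        congr 2
        push_cast
        ring
    _ ≤ (κ / (2 * c) * Real.exp (2 * c / κ * t ^ 2)) ^ (κ / 2) * Real.exp (-c * t ^ 2) := by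
        gcongr
    _ = (κ / (2 * c)) ^ (κ / 2) := by
        rw [Real.mul_rpow (by positivity) (by positivity), ← Real.exp_mul, mul_assoc,
          ← Real.exp_add]
        field_simp
        simp

theorem exists_rpow_mul_exp_neg_mul_sq_le_twoSidedDecay {c : ℝ} (hc : 0 < c) (hε : 0 ≤ ε)
    (hκ : ε < κ) :
    ∃ C, 0 ≤ C ∧ ∀ t : ℝ, 0 < t → t ^ κ * Real.exp (-c * t ^ 2) ≤ C * twoSidedDecay ε t := by
  have hgauss {t δ : ℝ} (ht : 0 < t) (hδ : 0 < κ - δ) : t ^ κ * Real.exp (-c * t ^ 2) ≤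
      ((κ - δ) / (2 * c)) ^ ((κ - δ) / 2) * t ^ δ := by
    calc t ^ κ * Real.exp (-c * t ^ 2) = t ^ (κ - δ) * Real.exp (-c * t ^ 2) * t ^ δ := by
          rw [mul_right_comm, ← Real.rpow_add ht, sub_add_cancel]
      _ ≤ _ := by
          gcongr
          exact rpow_mul_exp_neg_mul_sq_le hc hδ ht
  set C₁ := ((κ - ε) / (2 * c)) ^ ((κ - ε) / 2)
  set C₂ := ((κ - -ε) / (2 * c)) ^ ((κ - -ε) / 2)
  have hC₁ : 0 ≤ C₁ := Real.rpow_nonneg (div_nonneg (by linarith) (by linarith)) _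
  refine ⟨max C₁ C₂, le_max_of_le_left hC₁, fun t ht => ?_⟩
  rw [twoSidedDecay, mul_min_of_nonneg _ _ (le_max_of_le_left hC₁)]
  refine le_min ((hgauss (δ := ε) ht (by linarith)).trans ?_)
    ((hgauss (δ := -ε) ht (by linarith)).trans ?_)
  · gcongr
    exact le_max_left _ _
  · gcongr
    exact le_max_right _ _

end DyadicSums

section HeatDifference

/-- The four regional bounds with constant `A` for the value `u` at `(x, y)` of the difference of
heat-semigroup Littlewood-Paley projections at frequency `N`, where `a = |x|`, `b = |y|` and
`r = |x - y|`. The parameter `M` is the order of decay when `(x, y)` has one inner and one outer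
point. -/
structure HeatDifferenceBound (d : ℕ) (σ c M A N a b r u : ℝ) : Prop where
  inner : a ≤ N⁻¹ → b ≤ N⁻¹ → u ≤ A * N ^ ((d : ℝ) - 2 * σ) * (a * b) ^ (-σ)
  inner_outer : 2 * a ≤ N⁻¹ → N⁻¹ ≤ b → u ≤ A * N ^ d * (N * a) ^ (-σ) * (N * b) ^ (-M)
  outer_inner : 2 * b ≤ N⁻¹ → N⁻¹ ≤ a → u ≤ A * N ^ d * (N * b) ^ (-σ) * (N * a) ^ (-M)
  outer : N⁻¹ / 2 ≤ a → N⁻¹ / 2 ≤ b →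
    u ≤ A * N ^ ((d : ℝ) - 2) / (a + b) ^ 2 * Real.exp (-c * N ^ 2 * r ^ 2)

variable {d : ℕ} {σ s c ε M A N a b r u : ℝ}

theorem hardyKernel_mul_rpow (ha : 0 < a) (hb : 0 < b) (δ τ s : ℝ) :
    hardyKernel δ τ a b * b ^ (-s) = hardyKernel δ (τ - s) a b * a ^ (-s) := by
  unfold hardyKernel
  split_ifs
  · rw [mul_assoc, ← Real.rpow_add hb, mul_right_comm, ← Real.rpow_add ha]
    ring_nf
  · simp

namespace HeatDifferenceBound

theorem symm (h : HeatDifferenceBound d σ c M A N a b r u) :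
    HeatDifferenceBound d σ c M A N b a r u where
  inner hb ha := mul_comm a b ▸ h.inner ha hb
  inner_outer := h.outer_inner
  outer_inner := h.inner_outer
  outer hb ha := add_comm a b ▸ h.outer ha hb

theorem rpow_mul_le_of_inner (h : HeatDifferenceBound d σ c M A N a b r u) (hA : 0 ≤ A)
    (hN : 0 < N) (ha : 0 < a) (hab : a ≤ b) (hbN : b ≤ N⁻¹) (hε : 0 ≤ ε)
    (hεd : ε ≤ s + d - 2 * σ) :
    N ^ s * u ≤ A * twoSidedDecay ε (N * b) * (hardyKernel d σ a b * b ^ (-s)) := by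
  have hb : 0 < b := ha.trans_le hab
  have hscale : N ^ s * (N ^ (d - 2 * σ) * (a * b) ^ (-σ)) =
      (N * b) ^ (s + d - 2 * σ) * (hardyKernel d σ a b * b ^ (-s)) := by
    rw [hardyKernel_of_le hab]
    -- In logarithmic coordinates, equality of monomials is a linear identity of exponents.
    obtain ⟨n, rfl⟩ : ∃ n, Real.exp n = N := ⟨_, Real.exp_log hN⟩
    obtain ⟨α, rfl⟩ : ∃ α, Real.exp α = a := ⟨_, Real.exp_log ha⟩
    obtain ⟨β, rfl⟩ : ∃ β, Real.exp β = b := ⟨_, Real.exp_log hb⟩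
    simp only [← Real.exp_mul, ← Real.exp_add]
    ring_nf
  calc N ^ s * u ≤ N ^ s * (A * N ^ (d - 2 * σ) * (a * b) ^ (-σ)) := by
        gcongr
        exact h.inner (hab.trans hbN) hbN
    _ = A * (N * b) ^ (s + d - 2 * σ) * (hardyKernel d σ a b * b ^ (-s)) := by
        rw [mul_assoc A, mul_left_comm, hscale, mul_assoc]
    _ ≤ _ := by
        have := hardyKernel_nonneg (d := d) (τ := σ) ha.le hb.le
        gcongr
        exact rpow_le_twoSidedDecay_of_le_one hε hεd (by positivity)
          ((le_div_iff₀' hN).1 (hbN.trans_eq (one_div N).symm))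

theorem rpow_mul_le_of_inner_outer (h : HeatDifferenceBound d σ c M A N a b r u) (hA : 0 ≤ A)
    (hN : 0 < N) (ha : 0 < a) (haN : 2 * a ≤ N⁻¹) (hbN : N⁻¹ ≤ b) (hε : 0 ≤ ε)
    (hεM : s + d - σ - M ≤ -ε) :
    N ^ s * u ≤ A * twoSidedDecay ε (N * b) * (hardyKernel d σ a b * b ^ (-s)) := by
  have hb : 0 < b := (inv_pos.2 hN).trans_le hbN
  have hscale : N ^ s * (N ^ d * ((N * a) ^ (-σ) * (N * b) ^ (-M))) =
      (N * b) ^ (s + d - σ - M) * (hardyKernel d σ a b * b ^ (-s)) := by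
    rw [hardyKernel_of_le (by linarith), ← Real.rpow_natCast]
    obtain ⟨n, rfl⟩ : ∃ n, Real.exp n = N := ⟨_, Real.exp_log hN⟩
    obtain ⟨α, rfl⟩ : ∃ α, Real.exp α = a := ⟨_, Real.exp_log ha⟩
    obtain ⟨β, rfl⟩ : ∃ β, Real.exp β = b := ⟨_, Real.exp_log hb⟩
    simp only [← Real.exp_mul, ← Real.exp_add]
    ring_nf
  calc N ^ s * u ≤ N ^ s * (A * N ^ d * (N * a) ^ (-σ) * (N * b) ^ (-M)) := by
        gcongr
        exact h.inner_outer haN hbN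
    _ = A * (N * b) ^ (s + d - σ - M) * (hardyKernel d σ a b * b ^ (-s)) := by
        rw [mul_assoc, mul_assoc, mul_left_comm, hscale, mul_assoc]
    _ ≤ _ := by
        have := hardyKernel_nonneg (d := d) (τ := σ) ha.le hb.le
        gcongr
        exact rpow_le_twoSidedDecay_of_one_le hε hεM ((inv_le_iff_one_le_mul₀' hN).1 hbN)

theorem rpow_mul_le_of_outer (h : HeatDifferenceBound d σ c M A N a b r u)
    (hN : 0 < N) (hr : 0 < r) (haN : N⁻¹ / 2 ≤ a) (hbN : N⁻¹ / 2 ≤ b) :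
    N ^ s * u ≤ A * ((N * r) ^ (s + d - 2) * Real.exp (-c * (N * r) ^ 2)) *
      (r ^ (2 - s - d) / (a + b) ^ 2) := by
  have hscale : N ^ s * N ^ ((d : ℝ) - 2) = (N * r) ^ (s + d - 2) * r ^ (2 - s - d) := by
    rw [Real.mul_rpow hN.le hr.le, mul_assoc, ← Real.rpow_add hr, ← Real.rpow_add hN]
    ring_nf
    simp
  calc N ^ s * u ≤ N ^ s * (A * N ^ ((d : ℝ) - 2) / (a + b) ^ 2 *
        Real.exp (-c * N ^ 2 * r ^ 2)) := by
        gcongr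
        exact h.outer haN hbN
    _ = A * (N ^ s * N ^ ((d : ℝ) - 2)) * Real.exp (-c * (N * r) ^ 2) / (a + b) ^ 2 := by
        rw [mul_pow, mul_assoc (-c)]
        ring
    _ = _ := by
        rw [hscale]
        ring

end HeatDifferenceBound

theorem rpow_div_add_sq_le_hardyKernel {δ : ℝ} (ha : 0 < a) (hab : 2 * a ≤ b) (hbr : b ≤ a + r)
    (hσ : 0 ≤ σ) (hs : 2 - δ ≤ s) :
    r ^ (2 - s - δ) / (a + b) ^ 2 ≤ 2 ^ (s + δ - 2) * (hardyKernel δ σ a b * b ^ (-s)) := by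
  have hb : 0 < b := by linarith
  calc r ^ (2 - s - δ) / (a + b) ^ 2 ≤ (b / 2) ^ (2 - s - δ) / b ^ 2 := by
        gcongr ?_ / ?_ ^ 2
        · exact Real.rpow_le_rpow_of_nonpos (by positivity) (by linarith) (by linarith)
        · linarith
    _ = 2 ^ (s + δ - 2) * (hardyKernel δ 0 a b * b ^ (-s)) := by
        rw [hardyKernel_of_le (by linarith), neg_zero, Real.rpow_zero, one_mul, ← Real.rpow_add hb,
          Real.div_rpow hb.le zero_le_two, div_right_comm, ← Real.rpow_natCast, ← Real.rpow_sub hb,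
          div_eq_mul_inv, ← Real.rpow_neg zero_le_two, mul_comm]
        push_cast
        ring_nf
    _ ≤ _ := by
        gcongr
        exact hardyKernel_mono ha hσ

theorem rpow_div_add_sq_le_localRieszKernel {δ : ℝ} (ha : 0 < a) (hab : a ≤ b) (hba : b ≤ 2 * a)
    (hr : 0 ≤ r) :
    r ^ (2 - s - δ) / (a + b) ^ 2 ≤ 2 ^ |s| * (localRieszKernel δ (2 - s) a b r * b ^ (-s)) := by
  have hb : 0 < b := ha.trans_le hab
  have hlocal := localRieszKernel_nonneg (d := δ) (θ := 2 - s) ha.le hb.le hr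
  have hweight := rpow_le_mul_rpow_of_comparable (L := 2) hb (add_pos ha hb) (by linarith)
    (by linarith) (-s)
  calc r ^ (2 - s - δ) / (a + b) ^ 2
      = r ^ (2 - s - δ) * (a + b) ^ (-(2 - s)) * (a + b) ^ (-s) := by
        rw [mul_assoc, ← Real.rpow_add (by positivity), div_eq_mul_inv, ← Real.rpow_natCast,
          ← Real.rpow_neg (by positivity)]
        push_cast
        ring_nf
    _ = localRieszKernel δ (2 - s) a b r * (a + b) ^ (-s) := by
        rw [localRieszKernel, if_pos ⟨by linarith, hba⟩]
    _ ≤ localRieszKernel δ (2 - s) a b r * (2 ^ |-s| * b ^ (-s)) := by gcongr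
    _ = _ := by rw [abs_neg, mul_left_comm]

theorem rpow_div_add_sq_le {δ : ℝ} (ha : 0 < a) (hab : a ≤ b) (hr : 0 ≤ r) (hbr : b ≤ a + r)
    (hσ : 0 ≤ σ) (hs : 2 - δ ≤ s) :
    r ^ (2 - s - δ) / (a + b) ^ 2 ≤ (2 ^ (s + δ - 2) + 2 ^ |s|) *
      ((hardyKernel δ σ a b + localRieszKernel δ (2 - s) a b r) * b ^ (-s)) := by
  have hb : 0 < b := ha.trans_le hab
  have hhardy := hardyKernel_nonneg (d := δ) (τ := σ) ha.le hb.le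
  have hlocal := localRieszKernel_nonneg (d := δ) (θ := 2 - s) ha.le hb.le hr
  rcases le_total (2 * a) b with hfar | hnear
  · refine (rpow_div_add_sq_le_hardyKernel ha hfar hbr hσ hs).trans ?_
    gcongr
    · exact le_add_of_nonneg_right (by positivity)
    · exact le_add_of_nonneg_right hlocal
  · refine (rpow_div_add_sq_le_localRieszKernel ha hab hnear hr).trans ?_
    gcongr
    · exact le_add_of_nonneg_left (by positivity)
    · exact le_add_of_nonneg_left hhardy

theorem exists_rpow_mul_le_of_heatDifferenceBound (hσ : 0 ≤ σ) (hc : 0 < c) (hA : 0 ≤ A)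
    (hε : 0 ≤ ε) (hεs : ε < s + d - 2) (hεd : ε ≤ s + d - 2 * σ) (hεM : s + d - σ - M ≤ -ε) :
    ∃ C, 0 ≤ C ∧ ∀ N a b r u : ℝ, 0 < N → 0 < a → a ≤ b → 0 < r → b ≤ a + r →
      HeatDifferenceBound d σ c M A N a b r u →
      N ^ s * u ≤ C * (twoSidedDecay ε (N * b) + twoSidedDecay ε (N * r)) *
        ((hardyKernel d σ a b + localRieszKernel d (2 - s) a b r) * b ^ (-s)) := by
  obtain ⟨C, hC, hgauss⟩ := exists_rpow_mul_exp_neg_mul_sq_le_twoSidedDecay hc hε hεs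
  set L : ℝ := 2 ^ (s + d - 2) + 2 ^ |s|
  refine ⟨A + A * (C * L), by positivity, fun N a b r u hN ha hab hr hbr h => ?_⟩
  have hb : 0 < b := ha.trans_le hab
  have hlocal := localRieszKernel_nonneg (d := d) (θ := 2 - s) ha.le hb.le hr.le
  have hdecay_b := twoSidedDecay_nonneg (ε := ε) (mul_pos hN hb).le
  have hdecay_r := twoSidedDecay_nonneg (ε := ε) (mul_pos hN hr).le
  set H := hardyKernel d σ a b * b ^ (-s)
  set W := (hardyKernel d σ a b + localRieszKernel d (2 - s) a b r) * b ^ (-s)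
  have hH : 0 ≤ H := mul_nonneg (hardyKernel_nonneg ha.le hb.le) (by positivity)
  have hHW : H ≤ W := mul_le_mul_of_nonneg_right (le_add_of_nonneg_right hlocal) (by positivity)
  have hW : 0 ≤ W := hH.trans hHW
  have of_hardy (hu : N ^ s * u ≤ A * twoSidedDecay ε (N * b) * H) :
      N ^ s * u ≤ (A + A * (C * L)) * (twoSidedDecay ε (N * b) + twoSidedDecay ε (N * r)) * W := by
    refine hu.trans ?_
    gcongr
    · exact le_add_of_nonneg_right (by positivity)
    · exact le_add_of_nonneg_right hdecay_r
  rcases le_total b N⁻¹ with hbN | hbN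
  · exact of_hardy (h.rpow_mul_le_of_inner hA hN ha hab hbN hε hεd)
  rcases le_total (2 * a) N⁻¹ with haN | haN
  · exact of_hardy (h.rpow_mul_le_of_inner_outer hA hN ha haN hbN hε hεM)
  have hspace : r ^ (2 - s - d) / (a + b) ^ 2 ≤ L * W :=
    rpow_div_add_sq_le ha hab hr.le hbr hσ (by linarith)
  calc N ^ s * u ≤ A * ((N * r) ^ (s + d - 2) * Real.exp (-c * (N * r) ^ 2)) *
        (r ^ (2 - s - d) / (a + b) ^ 2) :=
        h.rpow_mul_le_of_outer hN hr (by linarith) (by linarith [inv_pos.2 hN])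
    _ ≤ A * (C * twoSidedDecay ε (N * r)) * (L * W) := by
        gcongr A * ?_ * ?_
        exact hgauss _ (mul_pos hN hr)
    _ = A * (C * L) * twoSidedDecay ε (N * r) * W := by ring
    _ ≤ _ := by
        gcongr
        · exact le_add_of_nonneg_left hA
        · exact le_add_of_nonneg_left hdecay_b

theorem exists_tsum_rpow_mul_le_of_le (hσ : 0 ≤ σ) (hc : 0 < c) (hA : 0 ≤ A)
    (hs : 2 - d < s) (hsσ : 2 * σ < d + s) (hM : d + s - σ < M) :
    ∃ C ≠ ∞, ∀ (a b r : ℝ) (u : ℤ → ℝ), 0 < a → a ≤ b → 0 < r → b ≤ a + r →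
      (∀ k : ℤ, HeatDifferenceBound d σ c M A (2 ^ k) a b r (u k)) →
      ∑' k : ℤ, ENNReal.ofReal ((2 ^ k) ^ s * u k) ≤ C * ENNReal.ofReal
        ((hardyKernel d σ a b + localRieszKernel d (2 - s) a b r) * b ^ (-s)) := by
  obtain ⟨ε, hε, hε'⟩ : ∃ ε, 0 < ε ∧ ε < min (s + d - 2) (min (s + d - 2 * σ) (M - (s + d - σ))) :=
    exists_between (lt_min (by linarith) (lt_min (by linarith) (by linarith)))
  obtain ⟨hεs, hεd, hεM⟩ : ε < s + d - 2 ∧ ε < s + d - 2 * σ ∧ ε < M - (s + d - σ) := by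
    simpa only [lt_min_iff] using hε'
  obtain ⟨C, hC, hbound⟩ := exists_rpow_mul_le_of_heatDifferenceBound (M := M) hσ hc hA hε.le hεs
    hεd.le (by linarith)
  obtain ⟨S, hS, hsum⟩ := exists_tsum_twoSidedDecay_le hε
  refine ⟨ENNReal.ofReal C * (S + S), by finiteness, fun a b r u ha hab hr hbr h => ?_⟩
  have hb : 0 < b := ha.trans_le hab
  set W := (hardyKernel d σ a b + localRieszKernel d (2 - s) a b r) * b ^ (-s)
  calc ∑' k : ℤ, ENNReal.ofReal ((2 ^ k) ^ s * u k)
      ≤ ∑' k : ℤ, ENNReal.ofReal C * (ENNReal.ofReal (twoSidedDecay ε (2 ^ k * b)) +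
          ENNReal.ofReal (twoSidedDecay ε (2 ^ k * r))) * ENNReal.ofReal W := by
        refine ENNReal.tsum_le_tsum fun k => ?_
        have hdecay_b := twoSidedDecay_nonneg (ε := ε) (t := 2 ^ k * b) (by positivity)
        have hdecay_r := twoSidedDecay_nonneg (ε := ε) (t := 2 ^ k * r) (by positivity)
        rw [← ENNReal.ofReal_add hdecay_b hdecay_r, ← ENNReal.ofReal_mul hC,
          ← ENNReal.ofReal_mul (by positivity)]
        exact ENNReal.ofReal_le_ofReal (hbound _ a b r _ (by positivity) ha hab hr hbr (h k))
    _ = ENNReal.ofReal C * (∑' k : ℤ, ENNReal.ofReal (twoSidedDecay ε (2 ^ k * b)) +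
          ∑' k : ℤ, ENNReal.ofReal (twoSidedDecay ε (2 ^ k * r))) * ENNReal.ofReal W := by
        rw [ENNReal.tsum_mul_right, ENNReal.tsum_mul_left, ENNReal.tsum_add]
    _ ≤ _ := by
        gcongr
        · exact hsum b hb
        · exact hsum r hr

theorem hardyKernel_add_localRieszKernel_mul_rpow_le {δ θ : ℝ} (ha : 0 ≤ a) (hb : 0 ≤ b)
    (hr : 0 ≤ r) :
    (hardyKernel δ σ a b + localRieszKernel δ θ a b r) * b ^ (-s) ≤
      2 ^ |s| * (homogeneousMajorant δ σ (σ - s) θ a b r * b ^ (-s)) := by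
  have hmajorant := homogeneousMajorant_nonneg (d := δ) (τ := σ) (τ' := σ - s) (θ := θ) ha hb hr
  calc (hardyKernel δ σ a b + localRieszKernel δ θ a b r) * b ^ (-s)
      ≤ homogeneousMajorant δ σ (σ - s) θ a b r * b ^ (-s) := by
        unfold homogeneousMajorant
        gcongr
        exact le_add_of_nonneg_right (hardyKernel_nonneg hb ha)
    _ ≤ _ := le_mul_of_one_le_left (by positivity) (Real.one_le_rpow one_le_two (abs_nonneg s))

theorem hardyKernel_add_localRieszKernel_mul_rpow_swap_le {δ θ : ℝ} (ha : 0 < a) (hb : 0 < b)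
    (hr : 0 ≤ r) :
    (hardyKernel δ σ b a + localRieszKernel δ θ b a r) * a ^ (-s) ≤
      2 ^ |s| * (homogeneousMajorant δ σ (σ - s) θ a b r * b ^ (-s)) := by
  have hhardy := hardyKernel_nonneg (d := δ) (τ := σ) ha.le hb.le
  have hhardy' := hardyKernel_nonneg (d := δ) (τ := σ - s) hb.le ha.le
  have hweight : localRieszKernel δ θ b a r * a ^ (-s) ≤
      2 ^ |s| * (localRieszKernel δ θ a b r * b ^ (-s)) := by
    rw [localRieszKernel_comm, localRieszKernel]
    split_ifs with hab
    · have := rpow_le_mul_rpow_of_comparable hb ha hab.2 hab.1 (-s)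
      rw [abs_neg] at this
      rw [mul_left_comm]
      gcongr
    · simp
  calc (hardyKernel δ σ b a + localRieszKernel δ θ b a r) * a ^ (-s)
      = 1 * (hardyKernel δ (σ - s) b a * b ^ (-s)) + localRieszKernel δ θ b a r * a ^ (-s) := by
        rw [add_mul, hardyKernel_mul_rpow hb ha, one_mul]
    _ ≤ 2 ^ |s| * (hardyKernel δ (σ - s) b a * b ^ (-s)) +
        2 ^ |s| * (localRieszKernel δ θ a b r * b ^ (-s)) := by
        gcongr
        exact Real.one_le_rpow one_le_two (abs_nonneg s)
    _ ≤ _ := by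
        rw [← mul_add, ← add_mul, homogeneousMajorant]
        gcongr
        exact le_add_of_nonneg_left hhardy

theorem exists_tsum_rpow_mul_le_homogeneousMajorant (hσ : 0 ≤ σ) (hc : 0 < c) (hA : 0 ≤ A)
    (hs : 2 - d < s) (hsσ : 2 * σ < d + s) (hM : d + s - σ < M) :
    ∃ C ≠ ∞, ∀ (a b r : ℝ) (u : ℤ → ℝ), 0 < a → 0 < b → 0 < r → a ≤ b + r → b ≤ a + r →
      (∀ k : ℤ, HeatDifferenceBound d σ c M A (2 ^ k) a b r (u k)) →
      ∑' k : ℤ, ENNReal.ofReal ((2 ^ k) ^ s * u k) ≤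
        C * ENNReal.ofReal (homogeneousMajorant d σ (σ - s) (2 - s) a b r * b ^ (-s)) := by
  obtain ⟨C, hC, hsum⟩ := exists_tsum_rpow_mul_le_of_le hσ hc hA hs hsσ hM
  refine ⟨C * ENNReal.ofReal (2 ^ |s|), by finiteness,
    fun a b r u ha hb hr har hbr h => ?_⟩
  rw [mul_assoc, ← ENNReal.ofReal_mul (by positivity)]
  rcases le_total a b with hab | hba
  · refine (hsum a b r u ha hab hr hbr h).trans ?_
    gcongr C * ENNReal.ofReal ?_
    exact hardyKernel_add_localRieszKernel_mul_rpow_le ha.le hb.le hr.le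
  · refine (hsum b a r u hb hba hr har fun k => (h k).symm).trans ?_
    gcongr C * ENNReal.ofReal ?_
    exact hardyKernel_add_localRieszKernel_mul_rpow_swap_le ha hb hr.le

end HeatDifference

theorem enorm_integral_tsum_mul_le_lintegral {α ι : Type*} [MeasurableSpace α] {μ : Measure α}
    (a : ι → α → ℝ) (ha : ∀ i x, 0 ≤ a i x) (g : α → ℝ) :
    ‖∫ x, (∑' i, a i x) * g x ∂μ‖ₑ ≤ ∫⁻ x, (∑' i, ENNReal.ofReal (a i x)) * ‖g x‖ₑ ∂μ := by
  refine (enorm_integral_le_lintegral_enorm _).trans (lintegral_mono fun x => ?_)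
  rw [enorm_mul]
  gcongr
  calc ‖∑' i, a i x‖ₑ ≤ ∑' i, ‖a i x‖ₑ := enorm_tsum_le_tsum_enorm
    _ = ∑' i, ENNReal.ofReal (a i x) := tsum_congr fun i => Real.enorm_of_nonneg (ha i x)

theorem eLpNorm_lintegral_mul_enorm_le_of_ae_le {α β F : Type*} [MeasurableSpace α]
    [MeasurableSpace β] [NormedAddCommGroup F] {μ : Measure α} {ν : Measure β} {p C : ℝ≥0∞}
    (hC : C ≠ ∞) {k : α → β → ℝ≥0∞} {m : α → β → ℝ} {w : β → ℝ} (hw : ∀ y, 0 ≤ w y)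
    (hk : ∀ᵐ x ∂μ, ∀ᵐ y ∂ν, k x y ≤ C * ENNReal.ofReal (m x y * w y)) (f : β → F) :
    eLpNorm (fun x => ∫⁻ y, k x y * ‖f y‖ₑ ∂ν) p μ ≤
      C * eLpNorm (fun x => ∫⁻ y, ENNReal.ofReal (m x y) * ‖w y * ‖f y‖‖ₑ ∂ν) p μ := by
  lift C to ℝ≥0 using hC
  refine eLpNorm_le_nnreal_smul_eLpNorm_of_ae_le_mul' ?_ p
  filter_upwards [hk] with x hx
  simp only [enorm_eq_self]
  rw [← lintegral_const_mul' _ _ ENNReal.coe_ne_top]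
  refine lintegral_mono_ae ?_
  filter_upwards [hx] with y hy
  rw [enorm_mul, Real.enorm_of_nonneg (hw y), enorm_norm, ← mul_assoc (ENNReal.ofReal _),
    ← ENNReal.ofReal_mul' (hw y), ← mul_assoc]
  gcongr

theorem square_function_difference_neg_general {E F G : Type*} [NormedAddCommGroup E]
    [NormedSpace ℝ E] [FiniteDimensional ℝ E] [MeasurableSpace E] [BorelSpace E]
    [NormedAddCommGroup F] [NormedAddCommGroup G] (μ : Measure E) [μ.IsAddHaarMeasure] {d : ℕ}
    (hd : finrank ℝ E = d) {σ s c p M A : ℝ} (hσ : 0 ≤ σ) (hs : 2 - d < s) (hs2 : s < 2)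
    (hc : 0 < c) (hA : 0 ≤ A) (hM : d + s - σ < M) (hp : 1 < p) (hpσ : σ * p < d)
    (hps : d < (d + s - σ) * p) (K : ℤ → E → E → G)
    (hK : ∀ k x y, x ≠ 0 → y ≠ 0 →
      HeatDifferenceBound d σ c M A (2 ^ k) ‖x‖ ‖y‖ ‖x - y‖ ‖K k x y‖) :
    ∃ C : ℝ, 0 < C ∧ ∀ f : E → F, AEStronglyMeasurable f μ →
      eLpNorm (fun x => ∫⁻ y, (∑' k : ℤ, ENNReal.ofReal (((2 : ℝ) ^ k) ^ s * ‖K k x y‖)) *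
        ‖f y‖ₑ ∂μ) (ENNReal.ofReal p) μ ≤
      ENNReal.ofReal C * eLpNorm (fun y => ‖y‖ ^ (-s) * ‖f y‖) (ENNReal.ofReal p) μ := by
  subst hd
  set d := finrank ℝ E
  have hp0 : 0 < p := by linarith
  have hd0 : (0 : ℝ) < d := (mul_nonneg hσ hp0.le).trans_lt hpσ
  have : Nontrivial E := Module.nontrivial_of_finrank_pos (R := ℝ) (by exact_mod_cast hd0)
  have hσp : σ < d / p := (lt_div_iff₀ hp0).2 hpσ
  have hsp : d / p < d + s - σ := (div_lt_iff₀ hp0).2 hps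
  obtain ⟨C₁, hC₁, hsum⟩ :=
    exists_tsum_rpow_mul_le_homogeneousMajorant hσ hc hA hs (by linarith) hM
  obtain ⟨C₂, hC₂, hint⟩ := eLpNorm_lintegral_homogeneousMajorant_mul_le (μ := μ) (τ := σ)
    (τ' := σ - s) (θ := 2 - s) hp hσp (by linarith) (by linarith)
  refine ⟨(C₁ * C₂).toReal + 1, by positivity, fun f hf => ?_⟩
  set w : E → ℝ := fun y => ‖y‖ ^ (-s)
  have hw : AEMeasurable w μ := (measurable_norm.pow_const (-s)).aemeasurable
  have hkernel : ∀ᵐ x ∂μ, ∀ᵐ y ∂μ, ∑' k : ℤ, ENNReal.ofReal (((2 : ℝ) ^ k) ^ s * ‖K k x y‖) ≤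
      C₁ * ENNReal.ofReal
        (homogeneousMajorant d σ (σ - s) (2 - s) ‖x‖ ‖y‖ ‖x - y‖ * ‖y‖ ^ (-s)) := by
    filter_upwards [Measure.ae_ne μ 0] with x hx
    filter_upwards [Measure.ae_ne μ 0, Measure.ae_ne μ x] with y hy hyx
    exact hsum _ _ _ _ (norm_pos_iff.2 hx) (norm_pos_iff.2 hy) (norm_sub_pos_iff.2 hyx.symm)
      (norm_le_norm_add_norm_sub' x y) (norm_le_norm_add_norm_sub x y) fun k => hK k x y hx hy
  calc eLpNorm (fun x => ∫⁻ y, (∑' k : ℤ, ENNReal.ofReal (((2 : ℝ) ^ k) ^ s * ‖K k x y‖)) *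
        ‖f y‖ₑ ∂μ) (ENNReal.ofReal p) μ
      ≤ C₁ * eLpNorm (fun x => ∫⁻ y, ENNReal.ofReal
          (homogeneousMajorant d σ (σ - s) (2 - s) ‖x‖ ‖y‖ ‖x - y‖) * ‖w y * ‖f y‖‖ₑ ∂μ)
          (ENNReal.ofReal p) μ :=
        eLpNorm_lintegral_mul_enorm_le_of_ae_le hC₁ (fun y => by positivity) hkernel f
    _ ≤ C₁ * (C₂ * eLpNorm (fun y => w y * ‖f y‖) (ENNReal.ofReal p) μ) := by
        gcongr
        exact (hint _ (hw.mul hf.norm.aemeasurable).enorm).trans_eq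
          (congrArg (C₂ * ·) (eLpNorm_enorm _))
    _ ≤ _ := by
        rw [← mul_assoc]
        gcongr
        exact ENNReal.le_ofReal_iff_toReal_le (by finiteness) (by positivity) |>.2 (by linarith)

/-- Difference of square functions, case `-((d-2)/2)² ≤ a < 0` (i.e. `0 < σ ≤ (d-2)/2`):
if the kernels `K_N`, `N = 2^k`, satisfy the four regional bounds of
Lemma 6.1(2), then `‖∫ (∑_N N^s |K_N(x,y)|) |f(y)| dy‖_{L^p_x} ≤ C ‖ |y|^{-s} f ‖_{L^p}`
for `max{1, d/(d+s-σ)} < p < d/σ`. -/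
theorem square_function_difference_neg (d : ℕ) (hd : 3 ≤ d) (σ s c p : ℝ)
    (hσ0 : 0 < σ) (hσ : σ ≤ ((d : ℝ) - 2) / 2)
    (hs0 : 0 < s) (hs2 : s < 2) (hc : 0 < c)
    (hp1 : max 1 ((d : ℝ) / ((d : ℝ) + s - σ)) < p) (hp2 : p < (d : ℝ) / σ)
    (K : ℤ → EuclideanSpace ℝ (Fin d) → EuclideanSpace ℝ (Fin d) → ℝ)
    (hK_meas : ∀ k : ℤ, Measurable (Function.uncurry (K k)))
    (hK : ∀ M : ℝ, 0 < M → ∃ CM : ℝ, 0 < CM ∧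
      ∀ (k : ℤ) (x y : EuclideanSpace ℝ (Fin d)), x ≠ 0 → y ≠ 0 →
        ((‖x‖ ≤ ((2 : ℝ) ^ k)⁻¹ ∧ ‖y‖ ≤ ((2 : ℝ) ^ k)⁻¹ →
          |K k x y| ≤ CM * ((2 : ℝ) ^ k) ^ ((d : ℝ) - 2 * σ) * (‖x‖ * ‖y‖) ^ (-σ)) ∧
        (2 * ‖x‖ ≤ ((2 : ℝ) ^ k)⁻¹ ∧ ((2 : ℝ) ^ k)⁻¹ ≤ ‖y‖ →
          |K k x y| ≤ CM * ((2 : ℝ) ^ k) ^ d *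
            ((2 : ℝ) ^ k * ‖x‖) ^ (-σ) * ((2 : ℝ) ^ k * ‖y‖) ^ (-M)) ∧
        (2 * ‖y‖ ≤ ((2 : ℝ) ^ k)⁻¹ ∧ ((2 : ℝ) ^ k)⁻¹ ≤ ‖x‖ →
          |K k x y| ≤ CM * ((2 : ℝ) ^ k) ^ d *
            ((2 : ℝ) ^ k * ‖y‖) ^ (-σ) * ((2 : ℝ) ^ k * ‖x‖) ^ (-M)) ∧
        (((2 : ℝ) ^ k)⁻¹ / 2 ≤ ‖x‖ ∧ ((2 : ℝ) ^ k)⁻¹ / 2 ≤ ‖y‖ →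
          |K k x y| ≤ CM * ((2 : ℝ) ^ k) ^ ((d : ℝ) - 2) / (‖x‖ + ‖y‖) ^ 2 *
            Real.exp (-c * ((2 : ℝ) ^ k) ^ 2 * ‖x - y‖ ^ 2)))) :
    ∃ C : ℝ, 0 < C ∧ ∀ f : EuclideanSpace ℝ (Fin d) → ℂ, Measurable f →
      eLpNorm (fun x => ∫ y, (∑' k : ℤ, ((2 : ℝ) ^ k) ^ s * |K k x y|) * ‖f y‖)
        (ENNReal.ofReal p) volume ≤
      ENNReal.ofReal C *
        eLpNorm (fun y => ‖y‖ ^ (-s) * ‖f y‖) (ENNReal.ofReal p) volume := by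
  obtain ⟨hp1, hpd⟩ := max_lt_iff.1 hp1
  have : (3 : ℝ) ≤ d := by exact_mod_cast hd
  obtain ⟨A, hA, hbound⟩ := hK (d + s - σ + 1) (by linarith)
  obtain ⟨C, hC, hint⟩ := square_function_difference_neg_general (F := ℂ) volume
    finrank_euclideanSpace_fin hσ0.le (by linarith) hs2 hc hA.le (lt_add_one _) hp1
    ((lt_div_iff₀' hσ0).1 hp2) ((div_lt_iff₀' (by linarith)).1 hpd) K fun k x y hx hy =>
      have ⟨inner, inner_outer, outer_inner, outer⟩ := hbound k x y hx hy
      ⟨fun ha hb => inner ⟨ha, hb⟩, fun ha hb => inner_outer ⟨ha, hb⟩,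
        fun hb ha => outer_inner ⟨hb, ha⟩, fun ha hb => outer ⟨ha, hb⟩⟩
  refine ⟨C, hC, fun f hf => le_trans ?_ (hint f hf.aestronglyMeasurable)⟩
  refine eLpNorm_mono_enorm fun x => ?_
  simpa using enorm_integral_tsum_mul_le_lintegral (fun k y => ((2 : ℝ) ^ k) ^ s * |K k x y|)
    (fun k y => by positivity) fun y => ‖f y‖
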